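/- Let 1 < p ≤ q < ∞ with p' = p/(p−1), and let u, v be non-negative measurable functions on (0,∞). There exists a constant C > 0 such that (∫₀^{∞} ( u(t) ∫_{t}^{∞} F(s) ds )^q dt)^{1/q} ≤ C (∫₀^{∞} ( v(t) F(t) )^p dt)^{1/p} for every non-negative measurable function F on (0,∞), if and only if sup_{s>0} (∫₀^{s} u(t)^q dt)^{1/q} (∫_{s}^{∞} v(t)^{−p'} dt)^{1/p'} < ∞. -/

import Mathlib

open MeasureTheory Set ENNReal

/-!
For sufficiency, put `η = f ν` and sort the points `t` by the dyadic interval `(2^k, 2^(k+1)]`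
containing the tail `η (t, ∞)`. The points `s > t` with `η [s, ∞) ≤ 2^(k-1)` have total mass at most
`2^(k-1)`, so at least half of `η (t, ∞)` sits on the shell where
`2^(k-1) < η [s, ∞) ≤ 2^(k+1)`. Hölder's inequality on this shell and Muckenhoupt's condition at `t`
bound `2^k μ(-∞, t]^(1/q)` by the `L^p(V^p ν)` norm of `f` on the shell, and letting `t` run through
the level bounds its contribution to `∫ η (t, ∞)^q dμ`. Each point lies in at most two shells, and
`∑ x_k ^ (q/p) ≤ (∑ x_k) ^ (q/p)` because `p ≤ q`, so the levels sum up to the inequality.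

Necessity follows by testing the inequality on simple functions `g ≤ V^(-p')` supported in `(s, ∞)`
with finite integral, for which `(V g)^p ≤ g`.
-/

theorem tsum_rpow_le_rpow_tsum {ι : Type*} (a : ι → ℝ≥0∞) {r : ℝ} (hr : 1 ≤ r) :
    ∑' i, a i ^ r ≤ (∑' i, a i) ^ r := by
  have split (x : ℝ≥0∞) : x ^ r = x * x ^ (r - 1) := by
    simpa using ENNReal.rpow_add_of_nonneg (x := x) 1 (r - 1) zero_le_one (sub_nonneg.2 hr)
  calc ∑' i, a i ^ r = ∑' i, a i * a i ^ (r - 1) := by simp only [← split]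
    _ ≤ ∑' i, a i * (∑' j, a j) ^ (r - 1) := by
      gcongr with i
      exact ENNReal.le_tsum i
    _ = (∑' i, a i) ^ r := by rw [ENNReal.tsum_mul_right, ← split]

/-- The dyadic interval `(2 ^ k, 2 ^ (k + 1)]`, used to cut a tail function into its level sets. -/
def dyadicIoc (k : ℤ) : Set ℝ≥0∞ := Ioc (2 ^ k) (2 ^ (k + 1))

theorem measurableSet_dyadicIoc (k : ℤ) : MeasurableSet (dyadicIoc k) := measurableSet_Ioc

theorem pairwise_disjoint_dyadicIoc : Pairwise (Function.onFun Disjoint dyadicIoc) :=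
  (ENNReal.monotone_zpow one_le_two).pairwise_disjoint_on_Ioc_succ

theorem two_zpow_add_one (k : ℤ) : (2 : ℝ≥0∞) ^ (k + 1) = 2 * 2 ^ k := by
  rw [ENNReal.zpow_add two_ne_zero ofNat_ne_top, zpow_one, mul_comm]

section Measurable

variable {α : Type*} [MeasurableSpace α] {μ : Measure α} {p p' q : ℝ}

theorem lintegral_rpow_le_tsum_dyadicIoc {g : α → ℝ≥0∞} (hg : Measurable g)
    (hg_top : ∀ᵐ t ∂μ, g t ≠ ∞) (hq : 0 < q) :
    ∫⁻ t, g t ^ q ∂μ ≤ ∑' k : ℤ, (2 ^ (k + 1)) ^ q * μ (g ⁻¹' dyadicIoc k) := by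
  have pointwise : ∀ᵐ t ∂μ,
      g t ^ q ≤ ∑' k : ℤ, (g ⁻¹' dyadicIoc k).indicator (fun _ => (2 ^ (k + 1)) ^ q) t := by
    filter_upwards [hg_top] with t ht
    rcases eq_or_ne (g t) 0 with h0 | h0
    · simp [h0, ENNReal.zero_rpow_of_pos hq]
    · obtain ⟨k, hk⟩ := ENNReal.exists_mem_Ioc_zpow h0 ht one_lt_two ofNat_ne_top
      calc g t ^ q ≤ (2 ^ (k + 1)) ^ q := ENNReal.rpow_le_rpow hk.2 hq.le
        _ = (g ⁻¹' dyadicIoc k).indicator (fun _ => (2 ^ (k + 1)) ^ q) t := by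
          rw [indicator_of_mem (show t ∈ g ⁻¹' dyadicIoc k from hk)]
        _ ≤ _ := ENNReal.le_tsum k
  have level_meas (k : ℤ) : MeasurableSet (g ⁻¹' dyadicIoc k) := hg (measurableSet_dyadicIoc k)
  calc ∫⁻ t, g t ^ q ∂μ
      ≤ ∫⁻ t, ∑' k : ℤ, (g ⁻¹' dyadicIoc k).indicator (fun _ => (2 ^ (k + 1)) ^ q) t ∂μ :=
        lintegral_mono_ae pointwise
    _ = ∑' k : ℤ, (2 ^ (k + 1)) ^ q * μ (g ⁻¹' dyadicIoc k) := by
        rw [lintegral_tsum fun k => (measurable_const.indicator (level_meas k)).aemeasurable]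
        simp only [lintegral_indicator_const (level_meas _)]

theorem tsum_lintegral_dyadicIoc_le (h : α → ℝ≥0∞) {g : α → ℝ≥0∞} (hg : Measurable g) :
    ∑' k, ∫⁻ t in g ⁻¹' dyadicIoc k, h t ∂μ ≤ ∫⁻ t, h t ∂μ := by
  rw [← lintegral_iUnion (fun k => hg (measurableSet_dyadicIoc k))
    fun i j hij => (pairwise_disjoint_dyadicIoc hij).preimage g]
  exact setLIntegral_le_lintegral _ _

theorem tsum_lintegral_dyadicIoc_union_le (h : α → ℝ≥0∞) {g : α → ℝ≥0∞} (hg : Measurable g) :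
    ∑' k, ∫⁻ t in g ⁻¹' (dyadicIoc (k - 1) ∪ dyadicIoc k), h t ∂μ ≤ 2 * ∫⁻ t, h t ∂μ := by
  calc ∑' k, ∫⁻ t in g ⁻¹' (dyadicIoc (k - 1) ∪ dyadicIoc k), h t ∂μ
      ≤ ∑' k, (∫⁻ t in g ⁻¹' dyadicIoc (k - 1), h t ∂μ + ∫⁻ t in g ⁻¹' dyadicIoc k, h t ∂μ) :=
        ENNReal.tsum_le_tsum fun k => lintegral_union_le h _ _
    _ = ∑' k, ∫⁻ t in g ⁻¹' dyadicIoc k, h t ∂μ + ∑' k, ∫⁻ t in g ⁻¹' dyadicIoc k, h t ∂μ := by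
        rw [ENNReal.tsum_add]
        congr 1
        exact (Equiv.subRight (1 : ℤ)).tsum_eq fun k => ∫⁻ t in g ⁻¹' dyadicIoc k, h t ∂μ
    _ ≤ 2 * ∫⁻ t, h t ∂μ := by
        rw [two_mul]
        gcongr <;> exact tsum_lintegral_dyadicIoc_le h hg

theorem lintegral_le_rpow_lintegral_mul_rpow_lintegral_neg (hpp' : p.HolderConjugate p')
    {V f : α → ℝ≥0∞} (hV : Measurable V) (hf : Measurable f)
    (hVf : ∫⁻ t, (V t * f t) ^ p ∂μ ≠ ∞) (hVp' : ∫⁻ t, V t ^ (-p') ∂μ ≠ ∞) :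
    ∫⁻ t, f t ∂μ ≤
      (∫⁻ t, (V t * f t) ^ p ∂μ) ^ (1 / p) * (∫⁻ t, V t ^ (-p') ∂μ) ^ (1 / p') := by
  have hV_zero : ∀ᵐ t ∂μ, V t ≠ 0 := by
    filter_upwards [ae_lt_top (hV.pow_const _) hVp'] with t ht h0
    simp [h0, ENNReal.zero_rpow_of_neg (neg_neg_of_pos hpp'.symm.pos)] at ht
  have hVf_top : ∀ᵐ t ∂μ, V t * f t ≠ ∞ := by
    filter_upwards [ae_lt_top ((hV.mul hf).pow_const _) hVf] with t ht
    exact ((ENNReal.rpow_lt_top_iff_of_pos hpp'.pos).1 ht).ne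
  calc ∫⁻ t, f t ∂μ ≤ ∫⁻ t, ((fun t => V t * f t) * fun t => (V t)⁻¹) t ∂μ := by
        refine lintegral_mono_ae ?_
        filter_upwards [hV_zero, hVf_top] with t h0 hVf_t
        exact (ENNReal.le_div_iff_mul_le (.inl h0) (.inr hVf_t)).2 (mul_comm _ _).le
    _ ≤ (∫⁻ t, (V t * f t) ^ p ∂μ) ^ (1 / p) * (∫⁻ t, (V t)⁻¹ ^ p' ∂μ) ^ (1 / p') :=
        ENNReal.lintegral_mul_le_Lp_mul_Lq μ hpp' (hV.mul hf).aemeasurable hV.inv.aemeasurable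
    _ = _ := by simp only [ENNReal.inv_rpow, ENNReal.rpow_neg]

theorem lintegral_le_of_forall_simpleFunc_le [SigmaFinite μ] {f : α → ℝ≥0∞} {c : ℝ≥0∞}
    (h : ∀ g : SimpleFunc α NNReal, (∀ t, (g t : ℝ≥0∞) ≤ f t) → ∫⁻ t, g t ∂μ ≠ ∞ →
      ∫⁻ t, g t ∂μ ≤ c) :
    ∫⁻ t, f t ∂μ ≤ c := by
  rw [lintegral_eq_nnreal]
  refine iSup₂_le fun φ hφ => le_of_forall_lt fun L hL => ?_
  rw [← SimpleFunc.lintegral_eq_lintegral] at hL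
  obtain ⟨g, hgφ, hg_fin, hLg⟩ := SimpleFunc.exists_lt_lintegral_simpleFunc_of_lt_lintegral hL
  refine hLg.trans_le (h g (fun t => ?_) hg_fin.ne)
  exact (ENNReal.coe_le_coe.2 (hgφ t)).trans (hφ t)

end Measurable

theorem mul_rpow_le_self_of_le_rpow_neg {p p' : ℝ} (hpp' : p.HolderConjugate p') {v x : ℝ≥0∞}
    (hx : x ≤ v ^ (-p')) : (v * x) ^ p ≤ x := by
  have hx_pow : x ^ (p - 1) ≤ (v ^ p)⁻¹ :=
    calc x ^ (p - 1) ≤ (v ^ (-p')) ^ (p - 1) := ENNReal.rpow_le_rpow hx hpp'.sub_one_pos.le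
      _ = (v ^ p)⁻¹ := by
        rw [← ENNReal.rpow_mul, ← ENNReal.rpow_neg, neg_mul, mul_comm, hpp'.sub_one_mul_conj]
  calc (v * x) ^ p = v ^ p * x ^ (p - 1) * x := by
        rw [ENNReal.mul_rpow_of_nonneg _ _ hpp'.nonneg, mul_assoc]
        congr 1
        simpa using ENNReal.rpow_add_of_nonneg (x := x) (p - 1) 1 hpp'.sub_one_pos.le zero_le_one
    _ ≤ v ^ p * (v ^ p)⁻¹ * x := by gcongr
    _ ≤ x := mul_le_of_le_one_left' (ENNReal.mul_inv_le_one _)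

section Order

variable {α : Type*} [LinearOrder α] [MeasurableSpace α] {μ ν : Measure α}
  {p p' q : ℝ} {V f : α → ℝ≥0∞} {M : ℝ≥0∞}

/-- The points whose closed upper tail has `η`-mass in `(2 ^ (k - 1), 2 ^ (k + 1)]`. Closed tails
make an atom count towards its own tail; hence, even if `η` has atoms, the shell carries at least
half of the mass of each open tail `Ioi t` with `η (Ioi t) ∈ dyadicIoc k`. -/
def tailShell (η : Measure α) (k : ℤ) : Set α :=
  (fun s => η (Ici s)) ⁻¹' (dyadicIoc (k - 1) ∪ dyadicIoc k)

/-- The Hardy inequality with constant `C` for the operator `F ↦ ∫_{(t, ∞)} F dν`, from `L^p(V^p ν)`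
to `L^q(μ)`; a weight on the left-hand side is absorbed into `μ`. -/
def TailHardyInequality (μ ν : Measure α) (V : α → ℝ≥0∞) (p q : ℝ) (C : ℝ≥0∞) : Prop :=
  ∀ F : α → ℝ, Measurable F → (∀ t, 0 ≤ F t) →
    (∫⁻ t, (∫⁻ s in Ioi t, ENNReal.ofReal (F s) ∂ν) ^ q ∂μ) ^ (1 / q) ≤
      C * (∫⁻ t, (V t * ENNReal.ofReal (F t)) ^ p ∂ν) ^ (1 / p)

/-- Muckenhoupt's condition with constant `M`, which characterizes `TailHardyInequality`. The lower
tail is closed so that the characterization holds for measures with atoms. -/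
def MuckenhouptBound (μ ν : Measure α) (V : α → ℝ≥0∞) (p' q : ℝ) (M : ℝ≥0∞) : Prop :=
  ∀ s, μ (Iic s) ^ (1 / q) * (∫⁻ t in Ioi s, V t ^ (-p') ∂ν) ^ (1 / p') ≤ M

theorem MuckenhouptBound.lintegral_mul_measure_Iic_rpow_le (hM : MuckenhouptBound μ ν V p' q M)
    (hM_zero : M ≠ 0) (hM_top : M ≠ ∞) (hpp' : p.HolderConjugate p') (hq : 0 < q)
    (hV : Measurable V) (hf : Measurable f) {t : α} {J : Set α} (hJ : J ⊆ Ioi t) :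
    (∫⁻ s in J, f s ∂ν) * μ (Iic t) ^ (1 / q) ≤
      M * (∫⁻ s in J, (V s * f s) ^ p ∂ν) ^ (1 / p) := by
  rcases eq_or_ne (μ (Iic t)) 0 with h0 | h0
  · simp [h0, hq]
  have hB : ∫⁻ s in Ioi t, V s ^ (-p') ∂ν ≠ ∞ := by
    intro hB
    have hM_eq := hM t
    rw [hB, ENNReal.top_rpow_of_pos hpp'.symm.one_div_pos,
      ENNReal.mul_top (by simp [h0, hq.le]), top_le_iff] at hM_eq
    exact hM_top hM_eq
  rcases eq_or_ne (∫⁻ s in J, (V s * f s) ^ p ∂ν) ∞ with hVf | hVf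
  · rw [hVf, ENNReal.top_rpow_of_pos hpp'.one_div_pos, ENNReal.mul_top hM_zero]
    exact le_top
  have hJ_le : ∫⁻ s in J, V s ^ (-p') ∂ν ≤ ∫⁻ s in Ioi t, V s ^ (-p') ∂ν := lintegral_mono_set hJ
  have hp'_nonneg : 0 ≤ 1 / p' := hpp'.symm.one_div_nonneg
  calc (∫⁻ s in J, f s ∂ν) * μ (Iic t) ^ (1 / q)
      ≤ (∫⁻ s in J, (V s * f s) ^ p ∂ν) ^ (1 / p) *
          (∫⁻ s in J, V s ^ (-p') ∂ν) ^ (1 / p') * μ (Iic t) ^ (1 / q) := by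
        gcongr
        exact lintegral_le_rpow_lintegral_mul_rpow_lintegral_neg hpp' hV hf hVf
          (ne_top_of_le_ne_top hB hJ_le)
    _ ≤ (∫⁻ s in J, (V s * f s) ^ p ∂ν) ^ (1 / p) *
          (∫⁻ s in Ioi t, V s ^ (-p') ∂ν) ^ (1 / p') * μ (Iic t) ^ (1 / q) := by gcongr
    _ = μ (Iic t) ^ (1 / q) * (∫⁻ s in Ioi t, V s ^ (-p') ∂ν) ^ (1 / p') *
          (∫⁻ s in J, (V s * f s) ^ p ∂ν) ^ (1 / p) := by ring
    _ ≤ M * (∫⁻ s in J, (V s * f s) ^ p ∂ν) ^ (1 / p) := by gcongr; exact hM t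

end Order

section Borel

variable {α : Type*} [LinearOrder α] [TopologicalSpace α] [OrderClosedTopology α]
  [MeasurableSpace α] [BorelSpace α] {μ ν : Measure α}
  {p p' q : ℝ} {U V : α → ℝ≥0∞} {C M : ℝ≥0∞}

theorem measurable_measure_Ici (η : Measure α) : Measurable fun s => η (Ici s) :=
  Antitone.measurable fun _ _ hst => measure_mono (Ici_subset_Ici.2 hst)

theorem measurable_measure_Ioi (η : Measure α) : Measurable fun s => η (Ioi s) :=
  Antitone.measurable fun _ _ hst => measure_mono (Ioi_subset_Ioi hst)

theorem measurableSet_tailShell (η : Measure α) (k : ℤ) : MeasurableSet (tailShell η k) :=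
  measurable_measure_Ici η ((measurableSet_dyadicIoc _).union (measurableSet_dyadicIoc _))

theorem measure_Iic_rpow_mul_lintegral_Ioi_le_rpow_lintegral_rpow (hq : 0 < q)
    (f : α → ℝ≥0∞) (s : α) :
    μ (Iic s) ^ (1 / q) * ∫⁻ t in Ioi s, f t ∂ν ≤
      (∫⁻ t, (∫⁻ r in Ioi t, f r ∂ν) ^ q ∂μ) ^ (1 / q) := by
  rw [one_div, ENNReal.le_rpow_inv_iff hq, ENNReal.mul_rpow_of_nonneg _ _ hq.le,
    ENNReal.rpow_inv_rpow hq.ne', mul_comm, ← setLIntegral_const]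
  calc ∫⁻ _ in Iic s, (∫⁻ r in Ioi s, f r ∂ν) ^ q ∂μ
      ≤ ∫⁻ t in Iic s, (∫⁻ r in Ioi t, f r ∂ν) ^ q ∂μ :=
        setLIntegral_mono' measurableSet_Iic fun t ht =>
          ENNReal.rpow_le_rpow (lintegral_mono_set (Ioi_subset_Ioi ht)) hq.le
    _ ≤ ∫⁻ t, (∫⁻ r in Ioi t, f r ∂ν) ^ q ∂μ := setLIntegral_le_lintegral _ _

theorem TailHardyInequality.measure_Iic_rpow_mul_lintegral_Ioi_le
    (hC : TailHardyInequality μ ν V p q C) (hp : 0 < p) (hq : 0 < q) {g : α → NNReal}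
    (hg : Measurable g) (s : α) :
    μ (Iic s) ^ (1 / q) * ∫⁻ t in Ioi s, g t ∂ν ≤
      C * (∫⁻ t in Ioi s, (V t * g t) ^ p ∂ν) ^ (1 / p) := by
  set F : α → ℝ := (Ioi s).indicator fun t => g t
  have hF : Measurable F := hg.coe_nnreal_real.indicator measurableSet_Ioi
  have hF_nonneg (t : α) : 0 ≤ F t := indicator_nonneg (fun _ _ => NNReal.coe_nonneg _) t
  have ofReal_F : ∀ t ∈ Ioi s, ENNReal.ofReal (F t) = g t := fun t ht => by
    simp only [F, indicator_of_mem ht, ENNReal.ofReal_coe_nnreal]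
  have rhs_eq : ∫⁻ t, (V t * ENNReal.ofReal (F t)) ^ p ∂ν = ∫⁻ t in Ioi s, (V t * g t) ^ p ∂ν := by
    rw [← lintegral_indicator measurableSet_Ioi]
    refine lintegral_congr fun t => ?_
    by_cases ht : t ∈ Ioi s
    · rw [indicator_of_mem ht, ofReal_F t ht]
    · simp [F, indicator_of_notMem ht, hp]
  calc μ (Iic s) ^ (1 / q) * ∫⁻ t in Ioi s, g t ∂ν
      = μ (Iic s) ^ (1 / q) * ∫⁻ t in Ioi s, ENNReal.ofReal (F t) ∂ν := by
        rw [setLIntegral_congr_fun measurableSet_Ioi ofReal_F]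
    _ ≤ (∫⁻ t, (∫⁻ r in Ioi t, ENNReal.ofReal (F r) ∂ν) ^ q ∂μ) ^ (1 / q) :=
        measure_Iic_rpow_mul_lintegral_Ioi_le_rpow_lintegral_rpow hq _ s
    _ ≤ C * (∫⁻ t, (V t * ENNReal.ofReal (F t)) ^ p ∂ν) ^ (1 / p) := hC F hF hF_nonneg
    _ = C * (∫⁻ t in Ioi s, (V t * g t) ^ p ∂ν) ^ (1 / p) := by rw [rhs_eq]

theorem TailHardyInequality.measure_Iic_rpow_mul_rpow_le (hC : TailHardyInequality μ ν V p q C)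
    (hpp' : p.HolderConjugate p') (hq : 0 < q) {g : α → NNReal} (hg : Measurable g)
    (hgV : ∀ t, (g t : ℝ≥0∞) ≤ V t ^ (-p')) {s : α} (hg_fin : ∫⁻ t in Ioi s, g t ∂ν ≠ ∞) :
    μ (Iic s) ^ (1 / q) * (∫⁻ t in Ioi s, g t ∂ν) ^ (1 / p') ≤ C := by
  set b := ∫⁻ t in Ioi s, g t ∂ν
  rcases eq_or_ne b 0 with hb | hb
  · simp [hb, hpp'.symm.pos]
  have hp_nonneg : 0 ≤ 1 / p := hpp'.one_div_nonneg
  have b_split : b = b ^ (1 / p') * b ^ (1 / p) := by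
    rw [← ENNReal.rpow_add _ _ hb hg_fin, one_div, one_div, hpp'.symm.inv_add_inv_eq_one,
      ENNReal.rpow_one]
  have scaled : μ (Iic s) ^ (1 / q) * b ^ (1 / p') * b ^ (1 / p) ≤ C * b ^ (1 / p) :=
    calc μ (Iic s) ^ (1 / q) * b ^ (1 / p') * b ^ (1 / p) = μ (Iic s) ^ (1 / q) * b := by
          rw [mul_assoc, ← b_split]
      _ ≤ C * (∫⁻ t in Ioi s, (V t * g t) ^ p ∂ν) ^ (1 / p) :=
          hC.measure_Iic_rpow_mul_lintegral_Ioi_le hpp'.pos hq hg s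
      _ ≤ C * b ^ (1 / p) := by
          gcongr
          exact lintegral_mono fun t => mul_rpow_le_self_of_le_rpow_neg hpp' (hgV t)
  exact (ENNReal.mul_le_mul_iff_left (ENNReal.rpow_pos (pos_iff_ne_zero.2 hb) hg_fin).ne'
    (ENNReal.rpow_ne_top_of_nonneg hp_nonneg hg_fin)).1 scaled

theorem TailHardyInequality.muckenhouptBound [SigmaFinite ν]
    (hC : TailHardyInequality μ ν V p q C) (hC_top : C ≠ ∞) (hpp' : p.HolderConjugate p')
    (hq : 0 < q) : MuckenhouptBound μ ν V p' q C := by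
  intro s
  rcases eq_or_ne (μ (Iic s) ^ (1 / q)) 0 with hA | hA
  · rw [hA, zero_mul]
    exact zero_le
  rw [mul_comm, ← ENNReal.le_div_iff_mul_le (.inl hA) (.inr hC_top), one_div p',
    ENNReal.rpow_inv_le_iff hpp'.symm.pos]
  refine lintegral_le_of_forall_simpleFunc_le fun g hgV hg_fin => ?_
  rw [← ENNReal.rpow_inv_le_iff hpp'.symm.pos, ENNReal.le_div_iff_mul_le (.inl hA) (.inr hC_top),
    mul_comm, ← one_div]
  exact hC.measure_Iic_rpow_mul_rpow_le hpp' hq g.measurable hgV hg_fin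

theorem tailHardyInequality_restrict_Ioi_iff (a : α) (hU : Measurable U) (hq : 0 < q) :
    TailHardyInequality ((μ.restrict (Ioi a)).withDensity fun t => U t ^ q) (ν.restrict (Ioi a))
        V p q C ↔
      ∀ F : α → ℝ, Measurable F → (∀ t, 0 ≤ F t) →
        (∫⁻ t in Ioi a, (U t * ∫⁻ s in Ioi t, ENNReal.ofReal (F s) ∂ν) ^ q ∂μ) ^ (1 / q) ≤
          C * (∫⁻ t in Ioi a, (V t * ENNReal.ofReal (F t)) ^ p ∂ν) ^ (1 / p) := by
  have lhs_eq (f : α → ℝ≥0∞) :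
      ∫⁻ t, (∫⁻ s in Ioi t, f s ∂ν.restrict (Ioi a)) ^ q
          ∂(μ.restrict (Ioi a)).withDensity (fun t => U t ^ q) =
        ∫⁻ t in Ioi a, (U t * ∫⁻ s in Ioi t, f s ∂ν) ^ q ∂μ := by
    have tail_meas : Measurable fun t => ∫⁻ s in Ioi t, f s ∂ν.restrict (Ioi a) :=
      Antitone.measurable fun _ _ hst => lintegral_mono_set (Ioi_subset_Ioi hst)
    rw [lintegral_withDensity_eq_lintegral_mul _ (hU.pow_const q) (tail_meas.pow_const q)]
    refine setLIntegral_congr_fun measurableSet_Ioi fun t ht => ?_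
    simp only [Pi.mul_apply]
    rw [Measure.restrict_restrict measurableSet_Ioi, Ioi_inter_Ioi, sup_eq_left.2 (le_of_lt ht),
      ENNReal.mul_rpow_of_nonneg _ _ hq.le]
  simp only [TailHardyInequality, lhs_eq]

theorem muckenhouptBound_restrict_Ioi_iff (a : α) (hq : 0 < q) :
    MuckenhouptBound ((μ.restrict (Ioi a)).withDensity fun t => U t ^ q) (ν.restrict (Ioi a))
        V p' q M ↔
      ∀ s, a < s → (∫⁻ t in Ioc a s, U t ^ q ∂μ) ^ (1 / q) *
        (∫⁻ t in Ioi s, V t ^ (-p') ∂ν) ^ (1 / p') ≤ M := by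
  have lower_eq (s : α) : (μ.restrict (Ioi a)).withDensity (fun t => U t ^ q) (Iic s) =
      ∫⁻ t in Ioc a s, U t ^ q ∂μ := by
    rw [withDensity_apply _ measurableSet_Iic, Measure.restrict_restrict measurableSet_Iic,
      inter_comm, Ioi_inter_Iic]
  refine forall_congr' fun s => ?_
  rw [lower_eq, Measure.restrict_restrict measurableSet_Ioi, Ioi_inter_Ioi]
  rcases lt_or_ge a s with has | hsa
  · simp [has, has.le]
  · simp [hsa, hq]

end Borel

section SecondCountable

variable {α : Type*} [LinearOrder α] [TopologicalSpace α] [OrderTopology α]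
  [SecondCountableTopology α] [MeasurableSpace α]
  {μ ν η : Measure α} {p p' q : ℝ} {V f : α → ℝ≥0∞} {M : ℝ≥0∞}

theorem measure_le_of_forall_measure_Iic_le {S : Set α} {c : ℝ≥0∞}
    (h : ∀ t ∈ S, μ (Iic t) ≤ c) : μ S ≤ c := by
  by_cases hmax : ∃ m ∈ S, S ⊆ Iic m
  · obtain ⟨m, hm, hS⟩ := hmax
    exact (measure_mono hS).trans (h m hm)
  · obtain ⟨T, hTS, hT, hcover⟩ :=
      TopologicalSpace.isOpen_biUnion_countable S Iio fun _ _ => isOpen_Iio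
    have hST : S ⊆ ⋃ t ∈ T, Iic t := by
      intro s hs
      obtain ⟨t, ht, hst⟩ : ∃ t ∈ S, s < t := by
        simpa [subset_def] using fun hS => hmax ⟨s, hs, hS⟩
      have hsT : s ∈ ⋃ t ∈ T, Iio t := hcover ▸ mem_biUnion ht hst
      exact biUnion_mono subset_rfl (fun _ _ => Iio_subset_Iic_self) hsT
    calc μ S ≤ μ (⋃ t ∈ T, Iic t) := measure_mono hST
      _ = ⨆ t ∈ T, μ (Iic t) := measure_biUnion_eq_iSup hT
          (directedOn_iff_directed.2 (Monotone.directed_le fun _ _ hst => Iic_subset_Iic.2 hst))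
      _ ≤ c := iSup₂_le fun t ht => h t (hTS ht)

theorem measure_le_of_forall_measure_Ici_le {S : Set α} {c : ℝ≥0∞}
    (h : ∀ t ∈ S, μ (Ici t) ≤ c) : μ S ≤ c :=
  measure_le_of_forall_measure_Iic_le (α := αᵒᵈ) h

theorem two_zpow_le_two_mul_measure_Ioi_inter_tailShell {t : α} {k : ℤ}
    (ht : η (Ioi t) ∈ dyadicIoc k) :
    2 ^ k ≤ 2 * η (Ioi t ∩ tailShell η k) := by
  have two_pow : (2 : ℝ≥0∞) ^ k = 2 * 2 ^ (k - 1) := by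
    simpa using two_zpow_add_one (k - 1)
  have low_tail : η {s | η (Ici s) ≤ 2 ^ (k - 1)} ≤ 2 ^ (k - 1) :=
    measure_le_of_forall_measure_Ici_le fun _ hs => hs
  have cover : Ioi t ⊆ {s | η (Ici s) ≤ 2 ^ (k - 1)} ∪ (Ioi t ∩ tailShell η k) := by
    intro s hs
    rcases le_or_gt (η (Ici s)) (2 ^ (k - 1)) with hlow | hhigh
    · exact Or.inl hlow
    · have hle : η (Ici s) ≤ 2 ^ (k + 1) := (measure_mono (Ici_subset_Ioi.2 hs)).trans ht.2
      refine Or.inr ⟨hs, ?_⟩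
      rcases le_or_gt (η (Ici s)) (2 ^ k) with hk | hk
      · exact Or.inl ⟨hhigh, by rwa [sub_add_cancel]⟩
      · exact Or.inr ⟨hk, hle⟩
  have half_le : (2 : ℝ≥0∞) ^ (k - 1) ≤ η (Ioi t ∩ tailShell η k) := by
    have hsum : (2 : ℝ≥0∞) ^ (k - 1) + 2 ^ (k - 1) ≤ 2 ^ (k - 1) + η (Ioi t ∩ tailShell η k) :=
      calc (2 : ℝ≥0∞) ^ (k - 1) + 2 ^ (k - 1) = 2 ^ k := by rw [two_pow, two_mul]
        _ ≤ η (Ioi t) := ht.1.le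
        _ ≤ η {s | η (Ici s) ≤ 2 ^ (k - 1)} + η (Ioi t ∩ tailShell η k) :=
          (measure_mono cover).trans (measure_union_le _ _)
        _ ≤ 2 ^ (k - 1) + η (Ioi t ∩ tailShell η k) := by gcongr
    exact (ENNReal.add_le_add_iff_left (ENNReal.zpow_ne_top two_ne_zero ofNat_ne_top _)).1 hsum
  calc (2 : ℝ≥0∞) ^ k = 2 * 2 ^ (k - 1) := two_pow
    _ ≤ 2 * η (Ioi t ∩ tailShell η k) := by gcongr

theorem MuckenhouptBound.ae_lintegral_Ioi_ne_top (hM : MuckenhouptBound μ ν V p' q M)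
    (hM_zero : M ≠ 0) (hM_top : M ≠ ∞) (hpp' : p.HolderConjugate p') (hq : 0 < q)
    (hV : Measurable V) (hf : Measurable f)
    (hfin : M * (∫⁻ s, (V s * f s) ^ p ∂ν) ^ (1 / p) ≠ ∞) :
    ∀ᵐ t ∂μ, ∫⁻ s in Ioi t, f s ∂ν ≠ ∞ := by
  have hp_nonneg : 0 ≤ 1 / p := hpp'.one_div_nonneg
  have null_below : ∀ t ∈ {t | ∫⁻ s in Ioi t, f s ∂ν = ∞}, μ (Iic t) ≤ 0 := by
    intro t (ht : ∫⁻ s in Ioi t, f s ∂ν = ∞)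
    by_contra! hpos
    have hle :=
      calc (∫⁻ s in Ioi t, f s ∂ν) * μ (Iic t) ^ (1 / q)
          ≤ M * (∫⁻ s in Ioi t, (V s * f s) ^ p ∂ν) ^ (1 / p) :=
            hM.lintegral_mul_measure_Iic_rpow_le hM_zero hM_top hpp' hq hV hf subset_rfl
        _ ≤ M * (∫⁻ s, (V s * f s) ^ p ∂ν) ^ (1 / p) := by
            gcongr
            exact Measure.restrict_le_self
    rw [ht, ENNReal.top_mul (by simp [hpos.ne', hq.le]), top_le_iff] at hle
    exact hfin hle
  simpa [ae_iff] using measure_le_of_forall_measure_Iic_le null_below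

variable [BorelSpace α]

theorem MuckenhouptBound.two_zpow_mul_measure_Iic_rpow_le (hM : MuckenhouptBound μ ν V p' q M)
    (hM_zero : M ≠ 0) (hM_top : M ≠ ∞) (hpp' : p.HolderConjugate p') (hq : 0 < q)
    (hV : Measurable V) (hf : Measurable f) {t : α} {k : ℤ}
    (ht : ν.withDensity f (Ioi t) ∈ dyadicIoc k) :
    2 ^ (k + 1) * μ (Iic t) ^ (1 / q) ≤
      4 * M * (∫⁻ s in tailShell (ν.withDensity f) k, (V s * f s) ^ p ∂ν) ^ (1 / p) := by
  set D := tailShell (ν.withDensity f) k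
  have hmass : 2 ^ k ≤ 2 * ∫⁻ s in Ioi t ∩ D, f s ∂ν := by
    simpa only [withDensity_apply _ (measurableSet_Ioi.inter (measurableSet_tailShell _ k))]
      using two_zpow_le_two_mul_measure_Ioi_inter_tailShell ht
  have hp_nonneg : 0 ≤ 1 / p := hpp'.one_div_nonneg
  calc 2 ^ (k + 1) * μ (Iic t) ^ (1 / q)
      ≤ 2 * (2 * ∫⁻ s in Ioi t ∩ D, f s ∂ν) * μ (Iic t) ^ (1 / q) := by
        rw [two_zpow_add_one]
        gcongr
    _ = 4 * ((∫⁻ s in Ioi t ∩ D, f s ∂ν) * μ (Iic t) ^ (1 / q)) := by ring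
    _ ≤ 4 * (M * (∫⁻ s in Ioi t ∩ D, (V s * f s) ^ p ∂ν) ^ (1 / p)) := by
        gcongr 4 * ?_
        exact hM.lintegral_mul_measure_Iic_rpow_le hM_zero hM_top hpp' hq hV hf inter_subset_left
    _ ≤ 4 * (M * (∫⁻ s in D, (V s * f s) ^ p ∂ν) ^ (1 / p)) := by
        gcongr
        exact inter_subset_right
    _ = 4 * M * (∫⁻ s in D, (V s * f s) ^ p ∂ν) ^ (1 / p) := (mul_assoc _ _ _).symm

theorem MuckenhouptBound.rpow_mul_measure_level_le (hM : MuckenhouptBound μ ν V p' q M)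
    (hM_zero : M ≠ 0) (hM_top : M ≠ ∞) (hpp' : p.HolderConjugate p') (hq : 0 < q)
    (hV : Measurable V) (hf : Measurable f) (k : ℤ) :
    (2 ^ (k + 1)) ^ q * μ ((fun t => ν.withDensity f (Ioi t)) ⁻¹' dyadicIoc k) ≤
      (4 * M) ^ q *
        (∫⁻ s in tailShell (ν.withDensity f) k, (V s * f s) ^ p ∂ν) ^ (q / p) := by
  set P := ∫⁻ s in tailShell (ν.withDensity f) k, (V s * f s) ^ p ∂ν
  -- Scaling `μ` by the level turns the bound on each `Iic t` into a bound on the level set.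
  have on_level : ∀ t ∈ (fun t => ν.withDensity f (Ioi t)) ⁻¹' dyadicIoc k,
      (((2 : ℝ≥0∞) ^ (k + 1)) ^ q • μ) (Iic t) ≤ (4 * M * P ^ (1 / p)) ^ q := fun t ht =>
    calc (((2 : ℝ≥0∞) ^ (k + 1)) ^ q • μ) (Iic t)
        = (2 ^ (k + 1) * μ (Iic t) ^ (1 / q)) ^ q := by
          rw [Measure.smul_apply, smul_eq_mul, ENNReal.mul_rpow_of_nonneg _ _ hq.le,
            ← ENNReal.rpow_mul, one_div_mul_cancel hq.ne', ENNReal.rpow_one]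
      _ ≤ (4 * M * P ^ (1 / p)) ^ q :=
          ENNReal.rpow_le_rpow
            (hM.two_zpow_mul_measure_Iic_rpow_le hM_zero hM_top hpp' hq hV hf ht) hq.le
  calc (2 ^ (k + 1)) ^ q * μ ((fun t => ν.withDensity f (Ioi t)) ⁻¹' dyadicIoc k)
      ≤ (4 * M * P ^ (1 / p)) ^ q := measure_le_of_forall_measure_Iic_le on_level
    _ = (4 * M) ^ q * P ^ (q / p) := by
        rw [ENNReal.mul_rpow_of_nonneg _ _ hq.le, ← ENNReal.rpow_mul, one_div_mul_eq_div]

theorem MuckenhouptBound.lintegral_rpow_lintegral_Ioi_le (hM : MuckenhouptBound μ ν V p' q M)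
    (hM_zero : M ≠ 0) (hM_top : M ≠ ∞) (hpp' : p.HolderConjugate p') (hpq : p ≤ q)
    (hV : Measurable V) (hf : Measurable f) :
    ∫⁻ t, (∫⁻ s in Ioi t, f s ∂ν) ^ q ∂μ ≤
      (8 * M * (∫⁻ t, (V t * f t) ^ p ∂ν) ^ (1 / p)) ^ q := by
  set Q := ∫⁻ t, (V t * f t) ^ p ∂ν
  have hq : 0 < q := hpp'.pos.trans_le hpq
  rcases eq_or_ne (M * Q ^ (1 / p)) ∞ with htop | hfin
  · rw [mul_assoc, htop, ENNReal.mul_top (by norm_num), ENNReal.top_rpow_of_pos hq]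
    exact le_top
  have hqp : 1 ≤ q / p := (one_le_div hpp'.pos).2 hpq
  have tail_fin : ∀ᵐ t ∂μ, ν.withDensity f (Ioi t) ≠ ∞ := by
    simpa only [withDensity_apply _ measurableSet_Ioi]
      using hM.ae_lintegral_Ioi_ne_top hM_zero hM_top hpp' hq hV hf hfin
  calc ∫⁻ t, (∫⁻ s in Ioi t, f s ∂ν) ^ q ∂μ
      = ∫⁻ t, ν.withDensity f (Ioi t) ^ q ∂μ := by
        simp only [withDensity_apply _ measurableSet_Ioi]
    _ ≤ ∑' k : ℤ, (2 ^ (k + 1)) ^ q * μ ((fun t => ν.withDensity f (Ioi t)) ⁻¹' dyadicIoc k) :=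
        lintegral_rpow_le_tsum_dyadicIoc (measurable_measure_Ioi _) tail_fin hq
    _ ≤ ∑' k : ℤ, (4 * M) ^ q *
          (∫⁻ s in tailShell (ν.withDensity f) k, (V s * f s) ^ p ∂ν) ^ (q / p) :=
        ENNReal.tsum_le_tsum (hM.rpow_mul_measure_level_le hM_zero hM_top hpp' hq hV hf)
    _ ≤ (4 * M) ^ q *
          (∑' k : ℤ, ∫⁻ s in tailShell (ν.withDensity f) k, (V s * f s) ^ p ∂ν) ^ (q / p) := by
        rw [ENNReal.tsum_mul_left]
        gcongr
        exact tsum_rpow_le_rpow_tsum _ hqp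
    _ ≤ (4 * M) ^ q * (2 * Q) ^ (q / p) := by
        gcongr
        exact tsum_lintegral_dyadicIoc_union_le _ (measurable_measure_Ici _)
    _ ≤ (4 * M) ^ q * (2 ^ q * Q ^ (q / p)) := by
        rw [ENNReal.mul_rpow_of_nonneg _ _ (zero_le_one.trans hqp)]
        gcongr
        · exact one_le_two
        · exact div_le_self hq.le hpp'.lt.le
    _ = (8 * M * Q ^ (1 / p)) ^ q := by
        rw [← one_div_mul_eq_div, ENNReal.rpow_mul, ← ENNReal.mul_rpow_of_nonneg _ _ hq.le,
          ← ENNReal.mul_rpow_of_nonneg _ _ hq.le]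
        ring_nf

theorem MuckenhouptBound.tailHardyInequality (hM : MuckenhouptBound μ ν V p' q M)
    (hM_zero : M ≠ 0) (hM_top : M ≠ ∞) (hpp' : p.HolderConjugate p') (hpq : p ≤ q)
    (hV : Measurable V) :
    TailHardyInequality μ ν V p q (8 * M) := by
  intro F hF _
  rw [one_div q, ENNReal.rpow_inv_le_iff (hpp'.pos.trans_le hpq)]
  exact hM.lintegral_rpow_lintegral_Ioi_le hM_zero hM_top hpp' hpq hV hF.ennreal_ofReal

end SecondCountable

theorem stmt4_general {α : Type*} [LinearOrder α] [TopologicalSpace α] [OrderTopology α]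
    [SecondCountableTopology α] [MeasurableSpace α] [BorelSpace α] (μ ν : Measure α)
    [SigmaFinite ν] (a : α) {p q p' : ℝ} (hpp' : p.HolderConjugate p') (hpq : p ≤ q)
    {U V : α → ℝ≥0∞} (hU : Measurable U) (hV : Measurable V) :
    (∃ C : ℝ, 0 < C ∧ ∀ F : α → ℝ, Measurable F → (∀ t, 0 ≤ F t) →
      (∫⁻ t in Ioi a, (U t * ∫⁻ s in Ioi t, ENNReal.ofReal (F s) ∂ν) ^ q ∂μ) ^ (1 / q) ≤
        ENNReal.ofReal C *
          (∫⁻ t in Ioi a, (V t * ENNReal.ofReal (F t)) ^ p ∂ν) ^ (1 / p)) ↔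
    ∃ M : ℝ, ∀ s, a < s →
      (∫⁻ t in Ioc a s, U t ^ q ∂μ) ^ (1 / q) *
        (∫⁻ t in Ioi s, V t ^ (-p') ∂ν) ^ (1 / p') ≤ ENNReal.ofReal M := by
  have hq : 0 < q := hpp'.pos.trans_le hpq
  simp only [← tailHardyInequality_restrict_Ioi_iff a hU hq,
    ← muckenhouptBound_restrict_Ioi_iff a hq]
  constructor
  · rintro ⟨C, -, hC⟩
    exact ⟨C, hC.muckenhouptBound ofReal_ne_top hpp' hq⟩
  · rintro ⟨M, hM⟩
    have hM_max : MuckenhouptBound _ _ V p' q (ENNReal.ofReal (max M 1)) := fun s =>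
      (hM s).trans (ENNReal.ofReal_le_ofReal (le_max_left M 1))
    refine ⟨8 * max M 1, by positivity, ?_⟩
    simpa [ENNReal.ofReal_mul] using
      hM_max.tailHardyInequality (by simp) ofReal_ne_top hpp' hpq hV

/-- dual weighted Hardy inequality of Muckenhoupt and Bradley. For
`1 < p ≤ q < ∞`, the inequality
`(∫₀^∞ (u(t) ∫_t^∞ F)^q dt)^{1/q} ≤ C (∫₀^∞ (v F)^p dt)^{1/p}` holds for all non-negative
measurable `F` iff `sup_{s>0} (∫₀^s u^q)^{1/q} (∫_s^∞ v^{-p'})^{1/p'} < ∞`. -/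
theorem stmt4 (p q p' : ℝ) (hp : 1 < p) (hpq : p ≤ q) (hp'def : p' = p / (p - 1))
    (u v : ℝ → ℝ) (hu : Measurable u) (hv : Measurable v)
    (hu0 : ∀ t ∈ Ioi (0:ℝ), 0 ≤ u t) (hv0 : ∀ t ∈ Ioi (0:ℝ), 0 ≤ v t) :
    (∃ C : ℝ, 0 < C ∧ ∀ F : ℝ → ℝ, Measurable F → (∀ t, 0 ≤ F t) →
      (∫⁻ t in Ioi (0:ℝ),
          (ENNReal.ofReal (u t) * ∫⁻ s in Ioi t, ENNReal.ofReal (F s)) ^ q) ^ (1/q)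
        ≤ ENNReal.ofReal C *
          (∫⁻ t in Ioi (0:ℝ), (ENNReal.ofReal (v t) * ENNReal.ofReal (F t)) ^ p) ^ (1/p))
    ↔ (∃ M : ℝ, ∀ s : ℝ, 0 < s →
      (∫⁻ t in Ioo (0:ℝ) s, ENNReal.ofReal (u t) ^ q) ^ (1/q) *
      (∫⁻ t in Ioi s, ENNReal.ofReal (v t) ^ (-p')) ^ (1/p')
        ≤ ENNReal.ofReal M) := by
  simpa only [restrict_Ioo_eq_restrict_Ioc] using
    stmt4_general volume volume 0 ((Real.holderConjugate_iff_eq_conjExponent hp).2 hp'def) hpq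
      hu.ennreal_ofReal hv.ennreal_ofReal
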